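/- arXiv:1806.04325 — 2 statements merged into one kernel-verified Lean document; each statement's English description precedes it below -/
import Mathlib

section
/- Let A be a deterministic Büchi automaton over a nonempty finite alphabet α, with finite state type σ, total transition function step : σ → α → σ, initial state q₀, and accepting set F ⊆ σ. Assume every state q of A can reach F, i.e., for every q there exists a finite word w : List α with List.foldl step q w ∈ F. Then for every finite word p : List α there exists a stream s : ℕ → α accepted by A (its run visits F infinitely often) such that p is a prefix of s, i.e., for all i < p.length, s i equals the i-th letter of p. -/
/-- In a pruned deterministic Büchi automaton (every state can reach `F`),
every finite word is the prefix of some accepted stream. -/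
theorem prefix_extends_to_accepted_stream
    {α σ : Type*} [Fintype α] [Fintype σ] [Nonempty α]
    (step : σ → α → σ) (q₀ : σ) (F : Set σ)
    (run : (ℕ → α) → ℕ → σ)
    (hrun0 : ∀ s : ℕ → α, run s 0 = q₀)
    (hrunS : ∀ (s : ℕ → α) (i : ℕ), run s (i + 1) = step (run s i) (s i))
    (hreach : ∀ q : σ, ∃ w : List α, List.foldl step q w ∈ F)
    (p : List α) :
    ∃ s : ℕ → α, {i : ℕ | run s i ∈ F}.Infinite ∧
      ∀ i : ℕ, (h : i < p.length) → s i = p.get ⟨i, h⟩ := by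
  classical
  obtain ⟨a⟩ := ‹Nonempty α›
  choose w hw using hreach
  let ext : List α → List α := fun u => (u ++ [a]) ++ w (List.foldl step q₀ (u ++ [a]))
  let W : ℕ → List α := fun n => Nat.rec p (fun _ u => ext u) n
  have hW0 : W 0 = p := rfl
  have hWS : ∀ n, W (n + 1) = (W n ++ [a]) ++ w (List.foldl step q₀ (W n ++ [a])) :=
    fun n => rfl
  have hF : ∀ n, List.foldl step q₀ (W (n + 1)) ∈ F := by
    intro n
    rw [hWS, List.foldl_append]
    exact hw _
  have hlen : ∀ n, n ≤ (W n).length := by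
    intro n
    induction n with
    | zero => exact Nat.zero_le _
    | succ k ih =>
      rw [hWS]
      simp only [List.length_append, List.length_singleton]
      omega
  have hpre : ∀ m n, m ≤ n → W m <+: W n := by
    intro m n h
    induction n, h using Nat.le_induction with
    | base => exact List.prefix_rfl
    | succ k _ ih =>
      refine ih.trans ?_
      rw [hWS, List.append_assoc]
      exact List.prefix_append _ _
  have hs : ∀ n i, (h : i < (W n).length) →
      (W (i + 1))[i]'(hlen (i + 1)) = (W n)[i] := by
    intro n i h
    rcases le_total (i + 1) n with hle | hle
    · exact (hpre _ _ hle).getElem _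
    · exact ((hpre _ _ hle).getElem _).symm
  refine ⟨fun i => (W (i + 1))[i]'(hlen (i + 1)), ?_, ?_⟩
  · generalize hsd : (fun i => (W (i + 1))[i]'(hlen (i + 1))) = s
    have hs' : ∀ n i, (h : i < (W n).length) → s i = (W n)[i] := by
      intro n i h
      rw [← hsd]
      exact hs n i h
    have hr : ∀ n k, k ≤ (W n).length → run s k = List.foldl step q₀ ((W n).take k) := by
      intro n k
      induction k with
      | zero => intro _; simp [hrun0]
      | succ k ih =>
        intro h
        rw [hrunS, ih (by omega), hs' n k (by omega), List.take_succ_eq_append_getElem (by omega),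
          List.foldl_append]
        rfl
    rw [Set.infinite_iff_exists_gt]
    intro b
    refine ⟨(W (b + 1)).length, ?_, hlen (b + 1)⟩
    have h1 := hr (b + 1) _ le_rfl
    rw [List.take_length] at h1
    show run s _ ∈ F
    rw [h1]
    exact hF b
  · intro i h
    exact hs 0 i h
end

section
/- For streams a, b : ℕ → ℤ, define Until a b to hold iff there exists i ≥ 0 such that b i ≠ 0 and for all j < i, a j ≠ 0. Let c : ℕ → Prop be any predicate satisfying the recurrence c 0 ↔ (b 0 ≠ 0) and, for all i, c (i+1) ↔ (b (i+1) ≠ 0 ∨ c i). Then Until a b holds if and only if both (for every i, if ¬ c i then a i ≠ 0) and (there exists i with b i ≠ 0). -/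
/-- The `until` constraint of stream constraint programming: `Until a b` holds
iff there is a time `i` with `b i ≠ 0` and `a j ≠ 0` for all `j < i`. -/
def Until (a b : ℕ → ℤ) : Prop :=
  ∃ i : ℕ, b i ≠ 0 ∧ ∀ j < i, a j ≠ 0

/-- `a until b` is equivalent to `c == b fby (next b or c)`,
`(not c) -> (a ne 0)` and `eventually b`, where `c` records whether `b` has
been nonzero at some time point up to the present. -/
theorem until_iff_aux_decomposition (a b : ℕ → ℤ) (c : ℕ → Prop)
    (hc0 : c 0 ↔ b 0 ≠ 0)
    (hcS : ∀ i : ℕ, c (i + 1) ↔ (b (i + 1) ≠ 0 ∨ c i)) :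
    Until a b ↔ ((∀ i : ℕ, ¬ c i → a i ≠ 0) ∧ ∃ i : ℕ, b i ≠ 0) := by
  have key : ∀ i, c i ↔ ∃ j, j ≤ i ∧ b j ≠ 0 := by
    intro i
    induction i with
    | zero =>
      rw [hc0]
      constructor
      · intro h
        exact ⟨0, le_refl 0, h⟩
      · rintro ⟨j, hj, h⟩
        obtain rfl : j = 0 := by omega
        exact h
    | succ n ih =>
      rw [hcS, ih]
      constructor
      · rintro (h | ⟨j, hj, h⟩)
        · exact ⟨n + 1, le_refl _, h⟩
        · exact ⟨j, by omega, h⟩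
      · rintro ⟨j, hj, h⟩
        rcases Nat.lt_or_ge n j with hlt | hge
        · obtain rfl : j = n + 1 := by omega
          exact Or.inl h
        · exact Or.inr ⟨j, hge, h⟩
  constructor
  · rintro ⟨i, hb, ha⟩
    refine ⟨fun k hk => ?_, i, hb⟩
    apply ha
    by_contra hlt
    exact hk ((key k).2 ⟨i, by omega, hb⟩)
  · rintro ⟨ha, hb⟩
    refine ⟨Nat.find hb, Nat.find_spec hb, fun j hj => ha j ?_⟩
    rw [key]
    rintro ⟨k, hk, h⟩
    exact Nat.find_min hb (lt_of_le_of_lt hk hj) h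
end
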